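/- Let A ⊆ ℝ⁺ be porous at 0 and let (h_n)_{n∈ℕ} ∈ UMP(A). For every n ∈ ℕ, let (c_n, d_n) be the largest open interval contained in (0,h_n) − A. Then lim_{n→∞} d_n/h_n = 1. -/

import Mathlib

/-!
The gap `(c n, d n)` lies in `(0, d n)`, so `gapLength A (h n) = d n - c n ≤ gapLength A (d n)`.
For `q` greater than the porosity `p`, the definition of `p` as an upper limit gives
`gapLength A (d n) ≤ q * d n` for large `n` (note that `d n ≤ h n → 0`). Therefore
`d n / h n ≥ q⁻¹ * (gapLength A (h n) / h n)`, whose right side tends to `p / q`. Letting `q`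
decrease to `p > 0` shows that the lower limit of `d n / h n` is at least `1`, while `d n ≤ h n`
gives the upper bound.
-/

open Filter Set

/-- `gapLength E h` = λ(E,h): the length of the largest open subinterval of (0,h)
containing no point of `E` (0 if no such interval exists). -/
noncomputable def gapLength (E : Set ℝ) (h : ℝ) : ℝ :=
  sSup {l : ℝ | ∃ a b : ℝ, 0 ≤ a ∧ a ≤ b ∧ b ≤ h ∧ Set.Ioo a b ∩ E = ∅ ∧ l = b - a}

/-- The right upper porosity of `E` at 0. -/
noncomputable def upperPorosity (E : Set ℝ) : ℝ :=
  Filter.limsup (fun h => gapLength E h / h) (nhdsWithin (0:ℝ) (Set.Ioi 0))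

/-- The right lower porosity of `E` at 0. -/
noncomputable def lowerPorosity (E : Set ℝ) : ℝ :=
  Filter.liminf (fun h => gapLength E h / h) (nhdsWithin (0:ℝ) (Set.Ioi 0))

/-- `UMP E`: sequences of positive reals tending to 0 along which the upper limit
in the definition of porosity is attained. -/
def UMP (E : Set ℝ) : Set (ℕ → ℝ) :=
  {h | (∀ n, 0 < h n) ∧ Filter.Tendsto h Filter.atTop (nhds 0) ∧
    Filter.Tendsto (fun n => gapLength E (h n) / h n) Filter.atTop (nhds (upperPorosity E))}

/-- The set of all strongly porous at 0 subsets of ℝ⁺. -/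
def SP : Set (Set ℝ) := {E | E ⊆ Set.Ici 0 ∧ upperPorosity E = 1}

/-- `I` is an ideal on the set `X`. -/
def IsIdealOn (X : Set ℝ) (I : Set (Set ℝ)) : Prop :=
  I.Nonempty ∧ (∀ B ∈ I, B ⊆ X) ∧ (∀ B ∈ I, ∀ C : Set ℝ, C ⊆ B → C ∈ I) ∧
    (∀ B ∈ I, ∀ C ∈ I, B ∪ C ∈ I) ∧ X ∉ I

/-- `I` is a `Γ`-maximal ideal on `X`. -/
def IsMaximalIdealIn (X : Set ℝ) (Γ I : Set (Set ℝ)) : Prop :=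
  IsIdealOn X I ∧ I ⊆ Γ ∧ ∀ J : Set (Set ℝ), IsIdealOn X J → I ⊆ J → J ⊆ Γ → I = J

/-- `Î(SP)`: the intersection of all SP-maximal ideals on ℝ⁺. -/
def hatISP : Set (Set ℝ) :=
  {A | ∀ I : Set (Set ℝ), IsMaximalIdealIn (Set.Ici 0) SP I → A ∈ I}

/-- The q-blow up `E(q)` of a set `E ⊆ ℝ⁺`. -/
def blowUp (E : Set ℝ) (q : ℝ) : Set ℝ := ⋃ x ∈ E, Set.Ioo (q⁻¹ * x) (q * x)

/-- The lengths over which `gapLength` takes a supremum are bounded, so that this `sSup` is not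
a junk value. -/
lemma gapLength_bddAbove (E : Set ℝ) (h : ℝ) :
    BddAbove {l : ℝ | ∃ a b : ℝ, 0 ≤ a ∧ a ≤ b ∧ b ≤ h ∧ Set.Ioo a b ∩ E = ∅ ∧ l = b - a} :=
  ⟨h, by rintro l ⟨a, b, ha, _, hb, _, rfl⟩; linarith⟩

lemma gapLength_le (E : Set ℝ) {h : ℝ} (hh : 0 ≤ h) : gapLength E h ≤ h :=
  Real.sSup_le (by rintro l ⟨a, b, ha, _, hb, _, rfl⟩; linarith) hh

lemma sub_le_gapLength (E : Set ℝ) {a b : ℝ} (ha : 0 ≤ a) (hab : a ≤ b)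
    (hE : Set.Ioo a b ∩ E = ∅) : b - a ≤ gapLength E b :=
  le_csSup (gapLength_bddAbove E b) ⟨a, b, ha, hab, le_rfl, hE, rfl⟩

/-- Any number above the upper porosity eventually bounds the relative gap length; the ratio is
bounded by `1`, so the real-valued `limsup` is a genuine one. -/
lemma eventually_gapLength_lt (E : Set ℝ) {q : ℝ} (hq : upperPorosity E < q) :
    ∀ᶠ x in nhdsWithin (0 : ℝ) (Set.Ioi 0), gapLength E x / x < q := by
  refine eventually_lt_of_limsup_lt hq ?_
  refine isBoundedUnder_of_eventually_le (a := 1) ?_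
  filter_upwards [self_mem_nhdsWithin] with x hx
  exact div_le_one_of_le₀ (gapLength_le E (le_of_lt hx)) (le_of_lt hx)

theorem stmt1 (A : Set ℝ) (hA : A ⊆ Set.Ici 0) (hpor : 0 < upperPorosity A)
    (h : ℕ → ℝ) (hUMP : h ∈ UMP A) (c d : ℕ → ℝ)
    (hcd : ∀ n, 0 ≤ c n ∧ c n ≤ d n ∧ Set.Ioo (c n) (d n) ⊆ Set.Ioo 0 (h n) \ A ∧
      d n - c n = gapLength A (h n)) :
    Filter.Tendsto (fun n => d n / h n) Filter.atTop (nhds 1) := by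
  obtain ⟨hpos, hlim, hgap⟩ := hUMP
  -- The porosity is positive, so the gaps are eventually nondegenerate; an empty `Ioo` would
  -- not force `d n ≤ h n`.
  have hlt : ∀ᶠ n in atTop, c n < d n := by
    filter_upwards [hgap.eventually_const_lt hpor] with n hn
    have h1 : 0 < gapLength A (h n) := (div_pos_iff_of_pos_right (hpos n)).1 hn
    linarith [(hcd n).2.2.2]
  have hle : ∀ᶠ n in atTop, d n ≤ h n := by
    filter_upwards [hlt] with n hn
    exact ((Set.Ioo_subset_Ioo_iff hn).1
      ((hcd n).2.2.1.trans Set.sdiff_subset)).2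
  have hd0 : Tendsto d atTop (nhdsWithin 0 (Set.Ioi 0)) := by
    refine tendsto_nhdsWithin_iff.2 ⟨?_, ?_⟩
    · exact tendsto_of_tendsto_of_tendsto_of_le_of_le' tendsto_const_nhds hlim
        (Eventually.of_forall fun n => (hcd n).1.trans (hcd n).2.1) hle
    · filter_upwards [hlt] with n hn
      exact (hcd n).1.trans_lt hn
  refine tendsto_order.2 ⟨fun a ha => ?_, fun a ha => ?_⟩
  · -- Choose `q > p` so close to `p` that still `a * q < p`.
    obtain ⟨q, haq, hq⟩ : ∃ q, a * q < upperPorosity A ∧ upperPorosity A < q := by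
      have hc : Tendsto (fun q => a * q) (nhdsWithin (upperPorosity A) (Set.Ioi (upperPorosity A)))
          (nhds (a * upperPorosity A)) :=
        ((continuous_const_mul a).tendsto _).mono_left nhdsWithin_le_nhds
      exact ((hc.eventually_lt_const (by nlinarith)).and self_mem_nhdsWithin).exists
    filter_upwards [hgap.eventually_const_lt haq, hlt,
      hd0.eventually (eventually_gapLength_lt A hq)] with n h1 h2 h3
    have hh := hpos n
    have hd : 0 < d n := (hcd n).1.trans_lt h2
    have hE : Set.Ioo (c n) (d n) ∩ A = ∅ :=
      Set.eq_empty_of_forall_notMem fun x hx => ((hcd n).2.2.1 hx.1).2 hx.2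
    have h4 := sub_le_gapLength A (hcd n).1 h2.le hE
    have h5 := (hcd n).2.2.2
    rw [lt_div_iff₀ hh] at h1 ⊢
    rw [div_lt_iff₀ hd] at h3
    have hq0 : 0 < q := hpor.trans hq
    exact lt_of_mul_lt_mul_left (by linarith : q * (a * h n) < q * d n) hq0.le
  · filter_upwards [hle] with n hn
    exact (div_le_one_of_le₀ hn (hpos n).le).trans_lt ha
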